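/- arXiv:1409.3702 — 2 statements merged into one kernel-verified Lean document; each statement's English description precedes it below -/
import Mathlib

section
/- Let G be a strongly connected countable directed graph, F : E → ℝ a function and β ∈ ℝ such that A(β) is transient. Let m be a Borel measure on P(G) such that m(Z′(v)) < ∞ for every vertex v and m(Z′(μ)) = e^{−βF(μ)} m(Z′(r(μ))) for every finite path μ. Then m is dissipative, i.e. m(P(G) ∖ P(G)_wan) = 0. -/
open scoped ENNReal NNReal Classical
open Filter MeasureTheory

/-- A countable directed graph: countable sets of vertices and edges with
source and range maps. -/
structure DirGraph where
  V : Type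
  E : Type
  countV : Countable V
  countE : Countable E
  s : E → V
  r : E → V

namespace DirGraph

attribute [instance] countV countE

variable (G : DirGraph)

/-- `μ` is a finite path (a vertex counts as the empty path). -/
def IsPath (μ : List G.E) : Prop := μ.Chain' (fun e f => G.r e = G.s f)

/-- `μ` is a finite path from `u` to `w`. -/
def IsPathFrom (μ : List G.E) (u w : G.V) : Prop :=
  G.IsPath μ ∧ (∀ e ∈ μ.head?, G.s e = u) ∧ (∀ e ∈ μ.getLast?, G.r e = w) ∧ (μ = [] → u = w)

/-- A function `F : E → ℝ` extended to finite paths. -/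
def Fsum (F : G.E → ℝ) (μ : List G.E) : ℝ := (μ.map F).sum

/-- The matrix `A(β)` over the vertices, with entries in `[0,∞]`:
`A(β)_{uw} = Σ_{e : u → w} e^{-β F(e)}`. -/
noncomputable def Amat (F : G.E → ℝ) (β : ℝ) (u w : G.V) : ℝ≥0∞ :=
  ∑' e : {e : G.E // G.s e = u ∧ G.r e = w}, ENNReal.ofReal (Real.exp (-β * F e.1))

/-- The powers of the matrix `A(β)`, defined recursively; `A(β)⁰` is the identity matrix. -/
noncomputable def Apow (F : G.E → ℝ) (β : ℝ) : ℕ → G.V → G.V → ℝ≥0∞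
  | 0, u, w => if u = w then 1 else 0
  | n + 1, u, w => ∑' x : G.V, G.Amat F β u x * Apow F β n x w

/-- A sink is a vertex emitting no edges. -/
def IsSink (v : G.V) : Prop := ∀ e : G.E, G.s e ≠ v

/-- An infinite emitter is a vertex emitting infinitely many edges. -/
def InfEmitter (v : G.V) : Prop := {e : G.E | G.s e = v}.Infinite

/-- A set of vertices is hereditary when it is closed under following edges. -/
def Hereditary (H : Set G.V) : Prop := ∀ e : G.E, G.s e ∈ H → G.r e ∈ H

/-- A set of vertices `H` is saturated when every vertex of `V ∖ V∞` all of whose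
successors lie in `H` belongs to `H`. -/
def Saturated (H : Set G.V) : Prop :=
  ∀ v : G.V, ¬ G.IsSink v → ¬ G.InfEmitter v → (∀ e : G.E, G.s e = v → G.r e ∈ H) → v ∈ H

/-- `G` is cofinal when the only nonempty hereditary and saturated set of
vertices is the whole vertex set. -/
def Cofinal : Prop :=
  ∀ H : Set G.V, H.Nonempty → G.Hereditary H → G.Saturated H → H = Set.univ

/-- The set of non-wandering vertices: those lying on a loop of length ≥ 1. -/
def NW : Set G.V := {v | ∃ μ : List G.E, μ ≠ [] ∧ G.IsPathFrom μ v v}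

/-- `G` is strongly connected when there is a finite path between any two vertices. -/
def StronglyConnected : Prop := ∀ u w : G.V, ∃ μ : List G.E, G.IsPathFrom μ u w

/-- `G` is row-finite when every vertex emits only finitely many edges. -/
def RowFinite : Prop := ∀ v : G.V, {e : G.E | G.s e = v}.Finite

/-- `ψ` is an `A(β)`-harmonic vector. -/
def Harmonic (F : G.E → ℝ) (β : ℝ) (ψ : G.V → ℝ≥0) : Prop :=
  ∀ v : G.V, ∑' w : G.V, G.Amat F β v w * ψ w = (ψ v : ℝ≥0∞)

/-- `A(β)` is transient when `Σ_n A(β)ⁿ_{vv} < ∞` for every vertex. -/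
def Transient (F : G.E → ℝ) (β : ℝ) : Prop :=
  ∀ v : G.V, ∑' n : ℕ, G.Apow F β n v v ≠ ⊤

/-- `A(β)` is recurrent when `Σ_n A(β)ⁿ_{vv} = ∞` for some vertex. -/
def Recurrent (F : G.E → ℝ) (β : ℝ) : Prop :=
  ∃ v : G.V, ∑' n : ℕ, G.Apow F β n v v = ⊤

/-- An exit path: a sequence of vertices joined by edges which leaves every
finite set of vertices. -/
def IsExitPath (t : ℕ → G.V) : Prop :=
  (∀ i : ℕ, ∃ e : G.E, G.s e = t i ∧ G.r e = t (i + 1)) ∧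
  ∀ M : Set G.V, M.Finite → ∃ N : ℕ, ∀ i : ℕ, N ≤ i → t i ∉ M

/-- Tail equivalence of vertex sequences. -/
def TailEquiv (t t' : ℕ → G.V) : Prop :=
  ∃ k : ℤ, ∃ N : ℕ, ∀ i : ℕ, N ≤ i → 0 ≤ (i : ℤ) + k ∧ t ((i : ℤ) + k).toNat = t' i

/-- A simple loop based at `v`: a loop which returns to `v` only at the very end. -/
def IsSimpleLoop (v : G.V) (μ : List G.E) : Prop :=
  μ ≠ [] ∧ G.IsPathFrom μ v v ∧
  ∀ (i : ℕ) (h : i + 1 < μ.length), G.r (μ.get ⟨i, Nat.lt_of_succ_lt h⟩) ≠ v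

/-- `lⁿ_{vv}(β)`: the weighted number of simple loops of length `n` based at `v`. -/
noncomputable def loopSum (F : G.E → ℝ) (β : ℝ) (v : G.V) (n : ℕ) : ℝ≥0∞ :=
  ∑' μ : {μ : List G.E // μ.length = n ∧ G.IsSimpleLoop v μ},
    ENNReal.ofReal (Real.exp (-β * G.Fsum F μ.1))

/-- The space `P(G)` of infinite paths in `G`. -/
def PathSpace : Type := {p : ℕ → G.E // ∀ i : ℕ, G.r (p i) = G.s (p (i + 1))}

/-- The Borel σ-algebra of `P(G)` as a subspace of the product `E^ℕ` with `E`
discrete (for a countable discrete space, the Borel σ-algebra is the power set). -/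
instance : MeasurableSpace G.PathSpace :=
  letI : MeasurableSpace G.E := ⊤
  inferInstanceAs (MeasurableSpace {p : ℕ → G.E // ∀ i : ℕ, G.r (p i) = G.s (p (i + 1))})

/-- The cylinder set `Z'(v)` of infinite paths starting at the vertex `v`. -/
def cylV (v : G.V) : Set G.PathSpace := {p | G.s (p.1 0) = v}

/-- The cylinder set `Z'(μ)` of infinite paths beginning with the finite path `μ`. -/
def cylP (μ : List G.E) : Set G.PathSpace :=
  {p | ∀ (i : ℕ) (h : i < μ.length), p.1 i = μ.get ⟨i, h⟩}

/-- The set `P(G)_wan` of wandering infinite paths: those visiting each vertex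
only finitely many times. -/
def wanSet : Set G.PathSpace := {p | ∀ v : G.V, {i : ℕ | G.s (p.1 i) = v}.Finite}

end DirGraph

/-!
Write `w(μ) = e^{-βF(μ)}`. Extending a finite path edge by edge shows that the paths which begin
with `μ` and visit `v` exactly `n` steps after its end have measure at most
`w(μ) A(β)ⁿ_{r(μ) v} m(Z′(v))`. If `r(μ) = v`, then these bounds are summable over `n` by
transience at `v`, so by Borel–Cantelli almost no path beginning with `μ` visits `v` infinitely
often. Every path visiting `v` infinitely often begins with one of the countably many `μ` ending
at `v`.
-/

namespace DirGraph

variable {G : DirGraph} {F : G.E → ℝ} {β : ℝ} {m : Measure G.PathSpace}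

/-- The Boltzmann weight `e^{-βF(μ)}` of a finite path `μ`. -/
noncomputable def weight (F : G.E → ℝ) (β : ℝ) (μ : List G.E) : ℝ≥0∞ :=
  ENNReal.ofReal (Real.exp (-β * G.Fsum F μ))

/-- A measure on path space is subconformal when `m(Z′(μ)) ≤ e^{-βF(μ)} m(Z′(r(μ)))` for all
paths `μ` of positive length; such paths are written `μ ++ [e]` to make their range `r(e)`
available. Conformal measures are those with equality. -/
def IsSubconformal (F : G.E → ℝ) (β : ℝ) (m : Measure G.PathSpace) : Prop :=
  ∀ (μ : List G.E) (e : G.E), G.IsPath (μ ++ [e]) →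
    m (G.cylP (μ ++ [e])) ≤ weight F β (μ ++ [e]) * m (G.cylV (G.r e))

theorem weight_append (F : G.E → ℝ) (β : ℝ) (μ ν : List G.E) :
    weight F β (μ ++ ν) = weight F β μ * weight F β ν := by
  simp only [weight, Fsum, List.map_append, List.sum_append, mul_add, Real.exp_add,
    ENNReal.ofReal_mul (Real.exp_pos _).le]

theorem weight_ne_top (F : G.E → ℝ) (β : ℝ) (μ : List G.E) : weight F β μ ≠ ⊤ :=
  ENNReal.ofReal_ne_top

theorem Apow_succ_eq_tsum_edges (F : G.E → ℝ) (β : ℝ) (n : ℕ) (u v : G.V) :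
    G.Apow F β (n + 1) u v =
      ∑' e : {e : G.E // G.s e = u}, weight F β [e.1] * G.Apow F β n (G.r e) v := by
  let edgesByRange : (Σ x, {e : G.E // G.s e = u ∧ G.r e = x}) ≃ {e : G.E // G.s e = u} :=
    (Equiv.sigmaCongrRight fun x =>
      (Equiv.subtypeSubtypeEquivSubtypeInter (G.s · = u) (G.r · = x)).symm).trans
      (Equiv.sigmaFiberEquiv fun e : {e : G.E // G.s e = u} => G.r e)
  rw [← edgesByRange.tsum_eq, ENNReal.tsum_sigma']
  simp only [Apow, Amat, ← ENNReal.tsum_mul_right]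
  refine tsum_congr fun x => tsum_congr fun e => ?_
  simp [edgesByRange, weight, Fsum, e.2.2]

theorem isPath_iff_isChain {μ : List G.E} :
    G.IsPath μ ↔ μ.IsChain (fun e f => G.r e = G.s f) :=
  Iff.rfl

theorem isPath_append_singleton_append_singleton {μ : List G.E} {e f : G.E} :
    G.IsPath (μ ++ [e] ++ [f]) ↔ G.IsPath (μ ++ [e]) ∧ G.r e = G.s f := by
  simp [isPath_iff_isChain, List.isChain_append, and_comm, and_left_comm]

theorem isPath_map_range (p : G.PathSpace) (n : ℕ) : G.IsPath ((List.range n).map p.1) := by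
  rw [isPath_iff_isChain, List.isChain_map, List.isChain_range]
  exact fun i _ => p.2 i

theorem mem_cylP_map_range (p : G.PathSpace) (n : ℕ) : p ∈ G.cylP ((List.range n).map p.1) := by
  simp [cylP]

theorem mem_cylP_append_singleton {p : G.PathSpace} {μ : List G.E} {e : G.E} :
    p ∈ G.cylP (μ ++ [e]) ↔ p ∈ G.cylP μ ∧ p.1 μ.length = e := by
  simp only [cylP, Set.mem_ofPred_eq, List.get_eq_getElem, List.length_append,
    List.length_singleton, Nat.forall_lt_succ_right']
  simp +contextual [List.getElem_append_left]

theorem source_eq_range_of_mem_cylP {p : G.PathSpace} {μ : List G.E} {e : G.E}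
    (hp : p ∈ G.cylP (μ ++ [e])) : G.s (p.1 (μ.length + 1)) = G.r e := by
  rw [← p.2, (mem_cylP_append_singleton.1 hp).2]

theorem cylP_subset_iUnion_extension (μ : List G.E) (e : G.E) :
    G.cylP (μ ++ [e]) ⊆ ⋃ f : {f : G.E // G.s f = G.r e}, G.cylP (μ ++ [e] ++ [f.1]) := by
  intro p hp
  refine Set.mem_iUnion.2 ⟨⟨p.1 (μ ++ [e]).length, ?_⟩, mem_cylP_append_singleton.2 ⟨hp, rfl⟩⟩
  simpa using source_eq_range_of_mem_cylP hp

theorem measure_cylP_inter_le_tsum_extension (m : Measure G.PathSpace) (μ : List G.E) (e : G.E)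
    (B : Set G.PathSpace) :
    m (G.cylP (μ ++ [e]) ∩ B) ≤
      ∑' f : {f : G.E // G.s f = G.r e}, m (G.cylP (μ ++ [e] ++ [f.1]) ∩ B) := by
  refine (measure_mono ?_).trans (measure_iUnion_le _)
  rw [← Set.iUnion_inter]
  exact Set.inter_subset_inter_left B (cylP_subset_iUnion_extension μ e)

theorem IsSubconformal.measure_cylP_inter_visit_le (hm : IsSubconformal F β m) (v : G.V)
    (n : ℕ) {μ : List G.E} {e : G.E} (hμ : G.IsPath (μ ++ [e])) :
    m (G.cylP (μ ++ [e]) ∩ {p | G.s (p.1 (n + (μ.length + 1))) = v}) ≤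
      weight F β (μ ++ [e]) * (G.Apow F β n (G.r e) v * m (G.cylV v)) := by
  induction n generalizing μ e with
  | zero =>
    by_cases hv : G.r e = v
    · subst hv
      simpa [Apow] using (measure_mono Set.inter_subset_left).trans (hm μ e hμ)
    · have no_visit :
          G.cylP (μ ++ [e]) ∩ {p | G.s (p.1 (0 + (μ.length + 1))) = v} = ∅ := by
        refine Set.eq_empty_of_forall_notMem fun p ⟨hp, hpv⟩ => hv ?_
        rw [← source_eq_range_of_mem_cylP hp, ← zero_add (μ.length + 1), hpv]
      rw [no_visit, measure_empty]
      exact zero_le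
  | succ n ih =>
    set visit : Set G.PathSpace := {p | G.s (p.1 (n + 1 + (μ.length + 1))) = v}
    have extension_le (f : {f : G.E // G.s f = G.r e}) :
        m (G.cylP (μ ++ [e] ++ [f.1]) ∩ visit) ≤
          weight F β (μ ++ [e]) *
            (weight F β [f.1] * G.Apow F β n (G.r f) v * m (G.cylV v)) := by
      have h := ih (isPath_append_singleton_append_singleton.2 ⟨hμ, f.2.symm⟩)
      rwa [weight_append, List.length_append, List.length_singleton, ← add_assoc n,
        add_right_comm n, mul_assoc, ← mul_assoc (weight F β [f.1])] at h
    calc m (G.cylP (μ ++ [e]) ∩ visit)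
        ≤ ∑' f : {f : G.E // G.s f = G.r e}, m (G.cylP (μ ++ [e] ++ [f.1]) ∩ visit) :=
          measure_cylP_inter_le_tsum_extension m μ e visit
      _ ≤ ∑' f : {f : G.E // G.s f = G.r e}, weight F β (μ ++ [e]) *
            (weight F β [f.1] * G.Apow F β n (G.r f) v * m (G.cylV v)) :=
          ENNReal.tsum_le_tsum extension_le
      _ = weight F β (μ ++ [e]) * (G.Apow F β (n + 1) (G.r e) v * m (G.cylV v)) := by
          rw [ENNReal.tsum_mul_left, ENNReal.tsum_mul_right, Apow_succ_eq_tsum_edges]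

theorem IsSubconformal.measure_cylP_inter_frequently_visit_eq_zero (hm : IsSubconformal F β m)
    {v : G.V} {μ : List G.E} {e : G.E} (hμ : G.IsPath (μ ++ [e]))
    (hsum : ∑' n, G.Apow F β n (G.r e) v ≠ ⊤) (hfin : m (G.cylV v) ≠ ⊤) :
    m (G.cylP (μ ++ [e]) ∩ {p | ∃ᶠ n in atTop, G.s (p.1 n) = v}) = 0 := by
  have visits_summable :
      ∑' n, m (G.cylP (μ ++ [e]) ∩ {p | G.s (p.1 (n + (μ.length + 1))) = v}) ≠ ⊤ := by
    refine ne_top_of_le_ne_top ?_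
      (ENNReal.tsum_le_tsum fun n => hm.measure_cylP_inter_visit_le v n hμ)
    rw [ENNReal.tsum_mul_left, ENNReal.tsum_mul_right]
    exact ENNReal.mul_ne_top (weight_ne_top F β _) (ENNReal.mul_ne_top hsum hfin)
  refine measure_mono_null ?_ (measure_setOfPred_frequently_eq_zero visits_summable)
  rintro p ⟨hp, hpv⟩
  rw [Set.mem_ofPred_eq, ← map_add_atTop_eq_nat (μ.length + 1), frequently_map] at hpv
  exact hpv.mono fun n hn => ⟨hp, hn⟩

theorem exists_mem_cylP_of_frequently_visit {p : G.PathSpace} {v : G.V}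
    (hp : ∃ᶠ n in atTop, G.s (p.1 n) = v) :
    ∃ μ e, G.IsPath (μ ++ [e]) ∧ G.r e = v ∧ p ∈ G.cylP (μ ++ [e]) := by
  obtain ⟨k, hk, hkv⟩ := frequently_atTop.1 hp 1
  obtain ⟨n, rfl⟩ := Nat.exists_eq_add_of_le' hk
  have initial_path : (List.range (n + 1)).map p.1 = (List.range n).map p.1 ++ [p.1 n] := by
    rw [List.range_succ, List.map_append, List.map_singleton]
  exact ⟨(List.range n).map p.1, p.1 n, initial_path ▸ isPath_map_range p (n + 1),
    (p.2 n).trans hkv, initial_path ▸ mem_cylP_map_range p (n + 1)⟩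

theorem IsSubconformal.measure_frequently_visit_eq_zero (hm : IsSubconformal F β m) {v : G.V}
    (hsum : ∑' n, G.Apow F β n v v ≠ ⊤) (hfin : m (G.cylV v) ≠ ⊤) :
    m {p | ∃ᶠ n in atTop, G.s (p.1 n) = v} = 0 := by
  have null (μ : List G.E) (e : G.E) (h : G.IsPath (μ ++ [e]) ∧ G.r e = v) :
      m (G.cylP (μ ++ [e]) ∩ {p | ∃ᶠ n in atTop, G.s (p.1 n) = v}) = 0 :=
    hm.measure_cylP_inter_frequently_visit_eq_zero h.1 (h.2 ▸ hsum) hfin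
  refine measure_mono_null (fun p hp => ?_)
    (measure_iUnion_null fun μ => measure_iUnion_null fun e => measure_iUnion_null (null μ e))
  obtain ⟨μ, e, hμ, hev, hpμ⟩ := exists_mem_cylP_of_frequently_visit hp
  simp only [Set.mem_iUnion]
  exact ⟨μ, e, ⟨hμ, hev⟩, hpμ, hp⟩

theorem univ_diff_wanSet :
    Set.univ \ G.wanSet = ⋃ v, {p : G.PathSpace | ∃ᶠ n in atTop, G.s (p.1 n) = v} := by
  ext p
  simp only [wanSet, Nat.frequently_atTop_iff_infinite, Set.Infinite, Set.mem_sdiff, Set.mem_univ,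
    true_and, Set.mem_iUnion, Set.mem_ofPred_eq, not_forall]

end DirGraph

theorem stmt_10_general (G : DirGraph) (F : G.E → ℝ) (β : ℝ) (hT : G.Transient F β)
    (m : MeasureTheory.Measure G.PathSpace) (hfin : ∀ v : G.V, m (G.cylV v) ≠ ⊤)
    (hm : DirGraph.IsSubconformal F β m) :
    m (Set.univ \ G.wanSet) = 0 := by
  rw [DirGraph.univ_diff_wanSet]
  exact measure_iUnion_null fun v => hm.measure_frequently_visit_eq_zero (hT v) (hfin v)

/-- when `A(β)` is transient, every conformal measure on the path space
is dissipative. -/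
theorem stmt_10 (G : DirGraph) (hSC : G.StronglyConnected) (F : G.E → ℝ) (β : ℝ)
    (hT : G.Transient F β) (m : MeasureTheory.Measure G.PathSpace)
    (hfin : ∀ v : G.V, m (G.cylV v) ≠ ⊤)
    (hconf : ∀ μ : List G.E, G.IsPath μ → μ ≠ [] → ∀ w : G.V, (∀ e ∈ μ.getLast?, G.r e = w) →
      m (G.cylP μ) = ENNReal.ofReal (Real.exp (-β * G.Fsum F μ)) * m (G.cylV w)) :
    m (Set.univ \ G.wanSet) = 0 :=
  stmt_10_general G F β hT m hfin fun μ e hμ => (hconf _ hμ (by simp) _ (by simp)).le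
end

section
/- Let G be a countable directed graph, F : E → ℝ a function, β ∈ ℝ, v a vertex and t > 0 a real number. Then, as an identity in [0,∞], Σ_{k≥0} (Σ_{j≥1} l^j_{vv}(β) t^j)^k = Σ_{n≥0} A(β)ⁿ_{vv} tⁿ. -/
open scoped ENNReal NNReal Classical
open Filter MeasureTheory

/-!
A loop based at `v` breaks up at its visits to `v`, in exactly one way, into simple loops. So the
loops at `v` form a free monoid under concatenation, with the simple loops as its free generators,
and the weight of a path is multiplicative. Summing the weights of all loops, grouped by their
number `k` of simple factors, gives `Σ_k L^k`, where `L` is the sum of the weights of the simple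
loops; grouped by their length `n`, it gives `Σ_n A(β)ⁿ_{vv} tⁿ`. An edge `e` gets the weight
`e^{-βF(e)} t`, so that the powers of `t` are part of the multiplicative weight.

The freeness is a fact about words: a submonoid of a free monoid which contains `y` whenever it
contains `x` and `xy` is free on its prefix-minimal nonempty words.
-/

section ListSums

variable {α ι : Type*}

theorem tsum_fin_prod (f : α → ℝ≥0∞) (n : ℕ) :
    ∑' a : Fin n → α, ∏ i, f (a i) = (∑' a, f a) ^ n := by
  induction n with
  | zero => simp
  | succ n ih =>
    rw [← (Fin.consEquiv fun _ => α).tsum_eq, ENNReal.tsum_prod', pow_succ', ← ih,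
      ← ENNReal.tsum_mul_right]
    simp only [← ENNReal.tsum_mul_left, Fin.consEquiv_apply, Fin.prod_univ_succ, Fin.cons_zero,
      Fin.cons_succ]

theorem tsum_list_prod_map (f : α → ℝ≥0∞) :
    ∑' l : List α, (l.map f).prod = ∑' k : ℕ, (∑' a, f a) ^ k := by
  rw [← List.equivSigmaTuple.symm.tsum_eq, ENNReal.tsum_sigma']
  simp only [← tsum_fin_prod, List.equivSigmaTuple_symm_apply, List.map_ofFn, List.prod_ofFn,
    Function.comp_apply]

theorem tsum_tsum_subtype_eq_and (g : α → ι) (p : α → Prop) (f : α → ℝ≥0∞) :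
    ∑' i, ∑' a : {a // g a = i ∧ p a}, f a = ∑' a : {a // p a}, f a := by
  rw [← ENNReal.tsum_fiberwise (fun a : {a // p a} => f a) (fun a => g a)]
  refine tsum_congr fun i => ?_
  exact (((Equiv.subtypeSubtypeEquivSubtypeInter p (g · = i)).trans
    (Equiv.subtypeEquivRight fun _ => and_comm)).tsum_eq (fun a => f a)).symm

end ListSums

section PrefixBase

variable {α : Type*} {S C : Set (List α)}

open InformationTheory

theorem uniquelyDecodable_of_isAntichain_prefix (hC : IsAntichain (· <+: ·) C) (hnil : [] ∉ C) :
    UniquelyDecodable C := by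
  intro K
  induction K with
  | nil =>
    rintro (_ | ⟨y, L⟩) - hL h
    · rfl
    · simp only [List.flatten_nil, List.flatten_cons, List.nil_eq, List.append_eq_nil_iff] at h
      exact absurd (h.1 ▸ hL y List.mem_cons_self) hnil
  | cons x K ih =>
    rintro (_ | ⟨y, L⟩) hK hL h
    · simp only [List.flatten_nil, List.flatten_cons, List.append_eq_nil_iff] at h
      exact absurd (h.1 ▸ hK x List.mem_cons_self) hnil
    · rw [List.forall_mem_cons] at hK hL
      rw [List.flatten_cons, List.flatten_cons] at h
      have hxy : x = y := by
        rcases List.prefix_or_prefix_of_prefix ⟨_, h⟩ (List.prefix_append y _) with hp | hp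
        · exact hC.eq hK.1 hL.1 hp
        · exact (hC.eq hL.1 hK.1 hp).symm
      subst hxy
      rw [ih L hK.2 hL.2 (List.append_cancel_left h)]

/-- `S` is a left unitary submonoid of the free monoid on `α`, the elements of which are encoded
as lists: if `S` contains `x` and `x ++ y`, it contains `y`. -/
structure IsLeftUnitary (S : Set (List α)) : Prop where
  nil_mem : [] ∈ S
  append_mem {x y : List α} : x ∈ S → y ∈ S → x ++ y ∈ S
  mem_of_append_mem {x y : List α} : x ∈ S → x ++ y ∈ S → y ∈ S

/-- The prefix-minimal nonempty words of `S`. They freely generate `S` when `S` is left unitary. -/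
def prefixBase (S : Set (List α)) : Set (List α) :=
  {x | x ∈ S ∧ x ≠ [] ∧ ∀ y ∈ S, y <+: x → y = [] ∨ y = x}

theorem prefixBase_subset (S : Set (List α)) : prefixBase S ⊆ S := fun _ hx => hx.1

theorem uniquelyDecodable_prefixBase (S : Set (List α)) : UniquelyDecodable (prefixBase S) :=
  uniquelyDecodable_of_isAntichain_prefix
    (fun x hx _ hy hne hxy => (hy.2.2 x hx.1 hxy).elim hx.2.1 hne) (fun h => h.2.1 rfl)

namespace IsLeftUnitary

theorem flatten_mem (hS : IsLeftUnitary S) {L : List (List α)} (hL : ∀ x ∈ L, x ∈ S) :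
    L.flatten ∈ S := by
  induction L with
  | nil => exact hS.nil_mem
  | cons x L ih =>
    rw [List.forall_mem_cons] at hL
    exact hS.append_mem hL.1 (ih hL.2)

theorem exists_flatten_eq (hS : IsLeftUnitary S) {x : List α} (hx : x ∈ S) :
    ∃ L : List (List α), (∀ y ∈ L, y ∈ prefixBase S) ∧ L.flatten = x := by
  induction hn : x.length using Nat.strong_induction_on generalizing x with
  | _ n ih =>
    subst hn
    by_cases hnil : x = []
    · exact ⟨[], by simp [hnil]⟩
    by_cases hbase : x ∈ prefixBase S
    · exact ⟨[x], by simpa using hbase⟩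
    obtain ⟨y, hy, ⟨z, rfl⟩, hy_nil, hy_ne⟩ : ∃ y ∈ S, y <+: x ∧ y ≠ [] ∧ y ≠ x := by
      simpa [prefixBase, hx, hnil] using hbase
    have hz_nil : z ≠ [] := by simpa using hy_ne
    have hy_pos := List.length_pos_iff.2 hy_nil
    have hz_pos := List.length_pos_iff.2 hz_nil
    rw [List.length_append] at ih
    obtain ⟨K, hK, rfl⟩ := ih _ (by omega) hy rfl
    obtain ⟨L, hL, rfl⟩ := ih _ (by omega) (hS.mem_of_append_mem hy hx) rfl
    exact ⟨K ++ L, List.forall_mem_append.2 ⟨hK, hL⟩, List.flatten_append⟩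

theorem flatten_bijective (hS : IsLeftUnitary S) :
    Function.Bijective fun L : List (prefixBase S) =>
      (⟨(L.map Subtype.val).flatten,
        hS.flatten_mem (List.forall_mem_map.2 fun x _ => prefixBase_subset S x.2)⟩ : S) := by
  constructor
  · intro K L h
    exact List.map_injective_iff.2 Subtype.val_injective <|
      uniquelyDecodable_prefixBase S _ _ (List.forall_mem_map.2 fun x _ => x.2)
        (List.forall_mem_map.2 fun x _ => x.2) (congrArg Subtype.val h)
  · rintro ⟨x, hx⟩
    obtain ⟨L, hL, rfl⟩ := hS.exists_flatten_eq hx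
    lift L to List (prefixBase S) using hL
    exact ⟨L, rfl⟩

theorem tsum_pow_tsum_prefixBase (hS : IsLeftUnitary S) (w : α → ℝ≥0∞) :
    ∑' k : ℕ, (∑' x : prefixBase S, (x.1.map w).prod) ^ k = ∑' x : S, (x.1.map w).prod := by
  rw [← tsum_list_prod_map, ← (Equiv.ofBijective _ hS.flatten_bijective).tsum_eq
    fun x : S => (x.1.map w).prod]
  refine tsum_congr fun L => ?_
  simp only [Equiv.ofBijective_apply, List.map_flatten, List.prod_flatten, List.map_map,
    Function.comp_def]

end IsLeftUnitary

end PrefixBase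

namespace DirGraph

variable {G : DirGraph} {u w x y v : G.V} {e : G.E} {μ ν : List G.E}

theorem isPathFrom_nil : G.IsPathFrom [] u w ↔ u = w := by
  simp [IsPathFrom, IsPath, List.Chain']

theorem isPathFrom_cons : G.IsPathFrom (e :: μ) u w ↔ G.s e = u ∧ G.IsPathFrom μ (G.r e) w := by
  cases μ with
  | nil => simp [IsPathFrom, IsPath, List.Chain']
  | cons f μ =>
    simp only [IsPathFrom, IsPath, List.Chain', List.isChain_cons_cons, List.head?_cons,
      List.getLast?_cons_cons, Option.mem_some_iff, forall_eq', reduceCtorEq, false_imp_iff,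
      and_true, eq_comm (a := G.r e)]
    tauto

theorem isPathFrom_append :
    G.IsPathFrom (μ ++ ν) u w ↔ ∃ x, G.IsPathFrom μ u x ∧ G.IsPathFrom ν x w := by
  induction μ generalizing u with
  | nil => simp [isPathFrom_nil]
  | cons e μ ih => simp [isPathFrom_cons, ih, and_assoc]

theorem IsPathFrom.range_unique (hx : G.IsPathFrom μ u x) (hy : G.IsPathFrom μ u y) : x = y := by
  induction μ generalizing u with
  | nil => exact (isPathFrom_nil.1 hx).symm.trans (isPathFrom_nil.1 hy)
  | cons e μ ih => exact ih (isPathFrom_cons.1 hx).2 (isPathFrom_cons.1 hy).2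

theorem IsPathFrom.take_succ_iff (hμ : G.IsPathFrom μ u w) {i : ℕ} (hi : i < μ.length) :
    G.IsPathFrom (μ.take (i + 1)) u x ↔ G.r μ[i] = x := by
  have range_eq {y : G.V} (h : G.IsPathFrom (μ.take (i + 1)) u y) : G.r μ[i] = y := by
    rw [← List.take_concat_get' μ i hi, isPathFrom_append] at h
    obtain ⟨z, -, hz⟩ := h
    exact isPathFrom_nil.1 (isPathFrom_cons.1 hz).2
  refine ⟨range_eq, ?_⟩
  rintro rfl
  rw [← List.take_append_drop (i + 1) μ, isPathFrom_append] at hμ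
  obtain ⟨y, hy, -⟩ := hμ
  exact range_eq hy ▸ hy

/-- The loops based at `v`, including the empty one. -/
def loops (G : DirGraph) (v : G.V) : Set (List G.E) :=
  {μ | G.IsPathFrom μ v v}

theorem isLeftUnitary_loops (v : G.V) : IsLeftUnitary (G.loops v) where
  nil_mem := isPathFrom_nil.2 rfl
  append_mem hμ hν := isPathFrom_append.2 ⟨v, hμ, hν⟩
  mem_of_append_mem hμ hμν := by
    obtain ⟨x, hx, hν⟩ := isPathFrom_append.1 hμν
    exact hx.range_unique hμ ▸ hν

theorem isSimpleLoop_iff_mem_prefixBase : G.IsSimpleLoop v μ ↔ μ ∈ prefixBase (G.loops v) := by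
  constructor
  · rintro ⟨hnil, hμ, hsimple⟩
    refine ⟨hμ, hnil, fun ν hν hνμ => ?_⟩
    rw [List.prefix_iff_eq_take] at hνμ
    by_contra! h
    obtain ⟨i, hlen⟩ := Nat.exists_eq_succ_of_ne_zero (List.length_pos_iff.2 h.1).ne'
    have hlt : i + 1 < μ.length := by
      by_contra! hle
      exact h.2 (hνμ.trans (List.take_of_length_le (hlen ▸ hle)))
    rw [hlen] at hνμ
    rw [hνμ] at hν
    exact hsimple i hlt ((hμ.take_succ_iff (by omega)).1 hν)
  · rintro ⟨hμ, hnil, hmin⟩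
    refine ⟨hnil, hμ, fun i hi hr => ?_⟩
    have hloop : G.IsPathFrom (μ.take (i + 1)) v v := (hμ.take_succ_iff (by omega)).2 hr
    rcases hmin _ hloop (List.take_prefix _ _) with h | h
    · simp [hnil] at h
    · have hle : μ.length ≤ i + 1 := List.take_eq_self_iff μ |>.1 h
      omega

/-- The weight `e^{-βF(e)} z` of an edge, in which `z` counts the length: the product of the
weights along a path `μ` of length `n` is `e^{-βF(μ)} zⁿ`. -/
noncomputable def edgeWeight (F : G.E → ℝ) (β : ℝ) (z : ℝ≥0∞) (e : G.E) : ℝ≥0∞ :=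
  ENNReal.ofReal (Real.exp (-β * F e)) * z

theorem ofReal_exp_Fsum_cons (F : G.E → ℝ) (β : ℝ) (e : G.E) (μ : List G.E) :
    ENNReal.ofReal (Real.exp (-β * G.Fsum F (e :: μ))) =
      ENNReal.ofReal (Real.exp (-β * F e)) * ENNReal.ofReal (Real.exp (-β * G.Fsum F μ)) := by
  rw [← ENNReal.ofReal_mul (Real.exp_pos _).le, ← Real.exp_add, ← mul_add]
  simp only [Fsum, List.map_cons, List.sum_cons]

theorem prod_map_edgeWeight (F : G.E → ℝ) (β : ℝ) (z : ℝ≥0∞) (μ : List G.E) :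
    (μ.map (edgeWeight F β z)).prod =
      ENNReal.ofReal (Real.exp (-β * G.Fsum F μ)) * z ^ μ.length := by
  induction μ with
  | nil => simp [Fsum]
  | cons e μ ih =>
    rw [List.map_cons, List.prod_cons, ih, ofReal_exp_Fsum_cons, edgeWeight, List.length_cons]
    ring

theorem cons_path_bijective (n : ℕ) (u w : G.V) :
    Function.Bijective fun p : (Σ x, {e // G.s e = u ∧ G.r e = x} ×
        {μ : List G.E // μ.length = n ∧ G.IsPathFrom μ x w}) =>
      (⟨p.2.1.1 :: p.2.2.1, by
        obtain ⟨_, ⟨e, hs, rfl⟩, μ, hlen, hμ⟩ := p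
        exact ⟨congrArg (· + 1) hlen, isPathFrom_cons.2 ⟨hs, hμ⟩⟩⟩ :
        {μ : List G.E // μ.length = n + 1 ∧ G.IsPathFrom μ u w}) := by
  constructor
  · rintro ⟨_, ⟨e, hs, rfl⟩, μ, hμ⟩ ⟨_, ⟨f, hs', rfl⟩, ν, hν⟩ h
    obtain ⟨rfl, rfl⟩ := List.cons.inj (congrArg Subtype.val h)
    rfl
  · rintro ⟨_ | ⟨e, μ⟩, hlen, hμ⟩
    · simp at hlen
    · rw [isPathFrom_cons] at hμ
      exact ⟨⟨G.r e, ⟨e, hμ.1, rfl⟩, μ, Nat.succ.inj hlen, hμ.2⟩, rfl⟩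

theorem Apow_eq_tsum_paths (F : G.E → ℝ) (β : ℝ) (n : ℕ) (u w : G.V) :
    G.Apow F β n u w = ∑' μ : {μ : List G.E // μ.length = n ∧ G.IsPathFrom μ u w},
      ENNReal.ofReal (Real.exp (-β * G.Fsum F μ)) := by
  induction n generalizing u with
  | zero =>
    rw [Apow]
    split_ifs with h
    · rw [tsum_eq_single ⟨[], rfl, isPathFrom_nil.2 h⟩]
      · simp [Fsum]
      · rintro ⟨μ, hlen, _⟩ hne
        exact absurd (Subtype.ext (List.length_eq_zero_iff.1 hlen)) hne
    · refine (ENNReal.tsum_eq_zero.2 ?_).symm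
      rintro ⟨μ, hlen, hμ⟩
      rw [List.length_eq_zero_iff.1 hlen] at hμ
      exact absurd (isPathFrom_nil.1 hμ) h
  | succ n ih =>
    rw [← (Equiv.ofBijective _ (cons_path_bijective n u w)).tsum_eq, ENNReal.tsum_sigma', Apow]
    refine tsum_congr fun x => ?_
    simp only [ENNReal.tsum_prod', Equiv.ofBijective_apply, ofReal_exp_Fsum_cons,
      ENNReal.tsum_mul_left, ENNReal.tsum_mul_right, ih, Amat]

theorem tsum_tsum_length_mul_pow (F : G.E → ℝ) (β : ℝ) (z : ℝ≥0∞) (p : List G.E → Prop) :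
    ∑' n : ℕ, (∑' μ : {μ : List G.E // μ.length = n ∧ p μ},
        ENNReal.ofReal (Real.exp (-β * G.Fsum F μ))) * z ^ n =
      ∑' μ : {μ // p μ}, (μ.1.map (edgeWeight F β z)).prod := by
  rw [← tsum_tsum_subtype_eq_and List.length p (fun μ => (μ.map (edgeWeight F β z)).prod)]
  refine tsum_congr fun n => ?_
  rw [← ENNReal.tsum_mul_right]
  refine tsum_congr fun μ => ?_
  rw [prod_map_edgeWeight, μ.2.1]

theorem tsum_Apow_mul_pow (F : G.E → ℝ) (β : ℝ) (z : ℝ≥0∞) (u w : G.V) :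
    ∑' n : ℕ, G.Apow F β n u w * z ^ n =
      ∑' μ : {μ // G.IsPathFrom μ u w}, (μ.1.map (edgeWeight F β z)).prod := by
  simp only [Apow_eq_tsum_paths, tsum_tsum_length_mul_pow]

theorem loopSum_zero (F : G.E → ℝ) (β : ℝ) (v : G.V) : G.loopSum F β v 0 = 0 :=
  ENNReal.tsum_eq_zero.2 fun μ => absurd (List.length_eq_zero_iff.1 μ.2.1) μ.2.2.1

theorem tsum_loopSum_mul_pow (F : G.E → ℝ) (β : ℝ) (z : ℝ≥0∞) (v : G.V) :
    ∑' j : ℕ, G.loopSum F β v (j + 1) * z ^ (j + 1) =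
      ∑' μ : {μ // G.IsSimpleLoop v μ}, (μ.1.map (edgeWeight F β z)).prod := by
  calc ∑' j : ℕ, G.loopSum F β v (j + 1) * z ^ (j + 1)
      = ∑' j : ℕ, G.loopSum F β v j * z ^ j := by
        rw [tsum_eq_zero_add' (f := fun j => G.loopSum F β v j * z ^ j) ENNReal.summable,
          loopSum_zero, zero_mul, zero_add]
    _ = _ := tsum_tsum_length_mul_pow F β z _

end DirGraph

theorem stmt_11_general (G : DirGraph) (weight : G.E → ℝ≥0∞) (v : G.V) :
    ∑' k : ℕ, (∑' σ : {σ // G.IsSimpleLoop v σ}, (σ.1.map weight).prod) ^ k =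
      ∑' μ : G.loops v, (μ.1.map weight).prod := by
  have tsum_simpleLoop : ∑' σ : {σ // G.IsSimpleLoop v σ}, (σ.1.map weight).prod =
      ∑' σ : prefixBase (G.loops v), (σ.1.map weight).prod :=
    (Equiv.subtypeEquivRight fun _ => DirGraph.isSimpleLoop_iff_mem_prefixBase).tsum_eq
      fun σ : prefixBase (G.loops v) => (σ.1.map weight).prod
  rw [tsum_simpleLoop]
  exact (DirGraph.isLeftUnitary_loops v).tsum_pow_tsum_prefixBase weight

/-- the renewal identity relating simple loops and powers of `A(β)`. -/
theorem stmt_11 (G : DirGraph) (F : G.E → ℝ) (β : ℝ) (v : G.V) (t : ℝ) (ht : 0 < t) :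
    ∑' k : ℕ, (∑' j : ℕ, G.loopSum F β v (j + 1) * ENNReal.ofReal t ^ (j + 1)) ^ k
      = ∑' n : ℕ, G.Apow F β n v v * ENNReal.ofReal t ^ n := by
  rw [DirGraph.tsum_loopSum_mul_pow, DirGraph.tsum_Apow_mul_pow]
  exact stmt_11_general G (DirGraph.edgeWeight F β (ENNReal.ofReal t)) v
end
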